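/- arXiv:2512.08248 — 5 statements merged into one kernel-verified Lean document; each statement's English description precedes it below -/
import Mathlib

section
/- Let n ≥ 1, let c : ℝ → ℝⁿ and r : ℝ → ℝ, let t_c > 0, let η ≤ 0, and let r_d > 0. Let S, T, Y ⊆ ℝⁿ and U : ℝ → Set(ℝⁿ) with U(t) open for each t. Suppose there are c_S, c_T, c_Y ∈ ℝⁿ and r_S, r_T, r_Y > 0 such that the closed ball B(c_S, r_S) ⊆ S, B(c_T, r_T) ⊆ T, B(c_Y, r_Y) ⊆ Y, and suppose: (a) c(0) = c_S and r(0) = r_S; (b) c(t_c) = c_T and r(t_c) = r_T; and for all t ∈ [0, t_c]: (c) ‖c(t) − c_Y‖ + r(t) − r_Y ≤ η; (d) −r(t) + r_d ≤ η; (e) −d(c(t), U(t)) + r(t) ≤ η. Then for all t ∈ [0, t_c]: r(t) > 0; the closed ball B(c(0), r(0)) ⊆ S; B(c(t_c), r(t_c)) ⊆ T; and B(c(t), r(t)) ⊆ Y \ U(t). -/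
open Metric Set

/-- A spatiotemporal tube for the temporal reach-avoid-stay task with initial set `S`, target `T`,
output space `Y`, unsafe sets `U t` and prescribed time `tc`: the moving closed ball
`closedBall (c t) (r t)` starts inside `S`, ends inside `T`, and stays in `Y` and off `U t`.
The functions `c` and `r` are total, but only their values on `[0, tc]` are meant to matter. -/
structure IsSpatiotemporalTube {X : Type*} [PseudoMetricSpace X] (c : ℝ → X) (r : ℝ → ℝ)
    (S T Y : Set X) (U : ℝ → Set X) (tc : ℝ) : Prop where
  radius_pos : ∀ t ∈ Icc 0 tc, 0 < r t
  initial_subset : closedBall (c 0) (r 0) ⊆ S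
  final_subset : closedBall (c tc) (r tc) ⊆ T
  subset_diff : ∀ t ∈ Icc 0 tc, closedBall (c t) (r t) ⊆ Y \ U t

section

variable {E : Type*} [SeminormedAddCommGroup E] [NormedSpace ℝ E]

-- The tangential case `ρ = infDist x V` is included: the open ball misses `V`, hence so does its
-- closure because `V` is open, and in a normed space that closure is the whole closed ball.
theorem disjoint_closedBall_of_le_infDist {V : Set E} (hV : IsOpen V) {x : E} {ρ : ℝ}
    (hρ : ρ ≠ 0) (h : ρ ≤ infDist x V) : Disjoint (closedBall x ρ) V := by
  have ball_disjoint : Disjoint (ball x ρ) V :=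
    disjoint_ball_infDist.mono_left (ball_subset_ball h)
  rw [← closure_ball x hρ]
  exact ball_disjoint.closure_left hV

theorem stt_lemma_general {c : ℝ → E} {r : ℝ → ℝ} {tc η rd : ℝ} (hη : η ≤ 0) (hrd : 0 < rd)
    {S T Y : Set E} {U : ℝ → Set E} (hU : ∀ t ∈ Icc 0 tc, IsOpen (U t))
    {cS cT cY : E} {rS rT rY : ℝ}
    (hS : closedBall cS rS ⊆ S) (hT : closedBall cT rT ⊆ T) (hY : closedBall cY rY ⊆ Y)
    (hc_zero : c 0 = cS) (hr_zero : r 0 = rS) (hc_tc : c tc = cT) (hr_tc : r tc = rT)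
    (h_stay : ∀ t ∈ Icc 0 tc, ‖c t - cY‖ + r t - rY ≤ η)
    (h_radius : ∀ t ∈ Icc 0 tc, -r t + rd ≤ η)
    (h_avoid : ∀ t ∈ Icc 0 tc, -infDist (c t) (U t) + r t ≤ η) :
    IsSpatiotemporalTube c r S T Y U tc := by
  have radius_pos : ∀ t ∈ Icc 0 tc, 0 < r t := fun t ht ↦ by linarith [h_radius t ht]
  refine ⟨radius_pos, by rwa [hc_zero, hr_zero], by rwa [hc_tc, hr_tc],
    fun t ht ↦ subset_sdiff.2 ⟨?_, ?_⟩⟩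
  · have radius_add_dist_le : r t + dist (c t) cY ≤ rY := by
      rw [dist_eq_norm]
      linarith [h_stay t ht]
    exact (closedBall_subset_closedBall' radius_add_dist_le).trans hY
  · have radius_le_infDist : r t ≤ infDist (c t) (U t) := by linarith [h_avoid t ht]
    exact disjoint_closedBall_of_le_infDist (hU t ht) (radius_pos t ht).ne' radius_le_infDist

end

/-- Lemma 3.1: sufficient conditions for a time-varying ball to be a valid STT
for a temporal reach-avoid-stay task. -/
theorem stt_lemma (n : ℕ) (hn : 1 ≤ n)
    (c : ℝ → EuclideanSpace ℝ (Fin n)) (r : ℝ → ℝ)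
    (tc : ℝ) (htc : 0 < tc) (η : ℝ) (hη : η ≤ 0) (rd : ℝ) (hrd : 0 < rd)
    (S T Y : Set (EuclideanSpace ℝ (Fin n)))
    (U : ℝ → Set (EuclideanSpace ℝ (Fin n)))
    (hU : ∀ t, IsOpen (U t))
    (cS cT cY : EuclideanSpace ℝ (Fin n)) (rS rT rY : ℝ)
    (hrS : 0 < rS) (hrT : 0 < rT) (hrY : 0 < rY)
    (hSball : closedBall cS rS ⊆ S)
    (hTball : closedBall cT rT ⊆ T)
    (hYball : closedBall cY rY ⊆ Y)
    (ha1 : c 0 = cS) (ha2 : r 0 = rS)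
    (hb1 : c tc = cT) (hb2 : r tc = rT)
    (hc : ∀ t ∈ Icc (0:ℝ) tc, ‖c t - cY‖ + r t - rY ≤ η)
    (hd : ∀ t ∈ Icc (0:ℝ) tc, -r t + rd ≤ η)
    (he : ∀ t ∈ Icc (0:ℝ) tc, -infDist (c t) (U t) + r t ≤ η) :
    (∀ t ∈ Icc (0:ℝ) tc, 0 < r t) ∧
    closedBall (c 0) (r 0) ⊆ S ∧
    closedBall (c tc) (r tc) ⊆ T ∧
    (∀ t ∈ Icc (0:ℝ) tc, closedBall (c t) (r t) ⊆ Y \ U t) := by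
  have tube : IsSpatiotemporalTube c r S T Y U tc :=
    stt_lemma_general hη hrd (fun t _ ↦ hU t) hSball hTball hYball ha1 ha2 hb1 hb2 hc hd he
  exact ⟨tube.radius_pos, tube.initial_subset, tube.final_subset, tube.subset_diff⟩
end

section
/- Let t_c > 0, let r : ℝ → ℝ be Lipschitz on [0, t_c] with constant L_r ≥ 0, let ε ≥ 0, let η̂ ∈ ℝ with η̂ + L_r·ε ≤ 0, and let r_d ∈ ℝ. Let F ⊆ [0, t_c] be a set of sample times such that (i) for every t ∈ [0, t_c] there exists s ∈ F with |t − s| ≤ ε, and (ii) −r(s) + r_d ≤ η̂ for every s ∈ F. Then r(t) ≥ r_d for all t ∈ [0, t_c]. -/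
open Set

open scoped NNReal

section LipschitzSampling

variable {X : Type*} [PseudoMetricSpace X] {S F : Set X} {f : X → ℝ} {K : ℝ≥0} {ε : ℝ}

theorem sub_mul_le_of_lipschitzOnWith_of_dist_le {x y : X} (hf : LipschitzOnWith K f S)
    (hx : x ∈ S) (hy : y ∈ S) (hxy : dist x y ≤ ε) : f y - K * ε ≤ f x := by
  rw [sub_le_iff_le_add]
  calc
    f y ≤ f x + K * dist y x := hf.le_add_mul hy hx
    _ ≤ f x + K * ε := by rw [dist_comm]; gcongr

theorem radius_lower_bound_from_samples_general {η c : ℝ} (hf : LipschitzOnWith K f S)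
    (hη : η + K * ε ≤ 0) (hFS : F ⊆ S) (hdense : ∀ x ∈ S, ∃ y ∈ F, dist x y ≤ ε)
    (hsample : ∀ y ∈ F, -f y + c ≤ η) : ∀ x ∈ S, c ≤ f x := by
  intro x hx
  obtain ⟨y, hy, hxy⟩ := hdense x hx
  calc
    c ≤ f y + η := by linarith [hsample y hy]
    _ ≤ f y - K * ε := by linarith
    _ ≤ f x := sub_mul_le_of_lipschitzOnWith_of_dist_le hf hx (hFS hy) hxy

end LipschitzSampling

/-- Claim (i) in the proof of Theorem 3.4: a minimum-radius constraint verified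
at an ε-dense set of sample times extends to the whole horizon. -/
theorem radius_lower_bound_from_samples
    (tc : ℝ) (htc : 0 < tc) (r : ℝ → ℝ) (Lr : ℝ) (hLr : 0 ≤ Lr)
    (hLip : ∀ s ∈ Icc (0:ℝ) tc, ∀ t ∈ Icc (0:ℝ) tc, |r s - r t| ≤ Lr * |s - t|)
    (ε : ℝ) (hε : 0 ≤ ε) (ηh : ℝ) (hη : ηh + Lr * ε ≤ 0) (rd : ℝ)
    (F : Set ℝ) (hF : F ⊆ Icc (0:ℝ) tc)
    (hdense : ∀ t ∈ Icc (0:ℝ) tc, ∃ s ∈ F, |t - s| ≤ ε)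
    (hsample : ∀ s ∈ F, -r s + rd ≤ ηh) :
    ∀ t ∈ Icc (0:ℝ) tc, rd ≤ r t := by
  lift Lr to ℝ≥0 using hLr
  exact radius_lower_bound_from_samples_general (.of_dist_le_mul hLip) hη hF hdense hsample
end

section
/- Let n ≥ 1 and t_c > 0. Let c : ℝ → ℝⁿ be Lipschitz on [0, t_c] with constant L_c ≥ 0 and r : ℝ → ℝ be Lipschitz on [0, t_c] with constant L_r ≥ 0. Let c_Y ∈ ℝⁿ, r_Y ∈ ℝ, ε ≥ 0, and η̂ ∈ ℝ with η̂ + (L_c + L_r)·ε ≤ 0. Let F ⊆ [0, t_c] be a set of sample times such that (i) for every t ∈ [0, t_c] there exists s ∈ F with |t − s| ≤ ε, and (ii) ‖c(s) − c_Y‖ + r(s) − r_Y ≤ η̂ for every s ∈ F. Then for all t ∈ [0, t_c], ‖c(t) − c_Y‖ + r(t) − r_Y ≤ 0, and hence the closed ball B(c(t), r(t)) is contained in the closed ball B(c_Y, r_Y). -/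
open Metric Set

open scoped NNReal

section Sampling

variable {T X : Type*} [PseudoMetricSpace T] [PseudoMetricSpace X] {s F : Set T} {ε : ℝ≥0}

theorem le_add_mul_of_lipschitzOnWith_of_isCover {f : T → ℝ} {K : ℝ≥0} {a : ℝ}
    (hf : LipschitzOnWith K f s) (hFs : F ⊆ s) (hcover : IsCover ε s F)
    (hle : ∀ u ∈ F, f u ≤ a) {t : T} (ht : t ∈ s) : f t ≤ a + K * ε := by
  obtain ⟨u, hu, htu⟩ := hcover ht
  have hdist : dist t u ≤ ε := edist_le_coe.mp htu
  calc
    f t ≤ f u + K * dist t u := hf.le_add_mul ht (hFs hu)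
    _ ≤ a + K * ε := by gcongr; exact hle u hu

theorem lipschitzOnWith_dist_add_sub {c : T → X} {r : T → ℝ} {Lc Lr : ℝ≥0}
    (hc : LipschitzOnWith Lc c s) (hr : LipschitzOnWith Lr r s) (y : X) (ρ : ℝ) :
    LipschitzOnWith (Lc + Lr) (fun t ↦ dist (c t) y + r t - ρ) s := by
  have hdist : LipschitzOnWith Lc (fun t ↦ dist (c t) y) s := by
    simpa only [one_mul, Function.comp_def] using
      (LipschitzWith.dist_left y).comp_lipschitzOnWith hc
  simpa only [add_zero] using (hdist.add hr).sub (LipschitzWith.const ρ).lipschitzOnWith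

theorem state_space_containment_from_samples_general {c : T → X} {r : T → ℝ} {Lc Lr : ℝ≥0}
    (hc : LipschitzOnWith Lc c s) (hr : LipschitzOnWith Lr r s) {y : X} {ρ η : ℝ}
    (hη : η + (Lc + Lr) * ε ≤ 0) (hFs : F ⊆ s) (hcover : IsCover ε s F)
    (hsample : ∀ u ∈ F, dist (c u) y + r u - ρ ≤ η) {t : T} (ht : t ∈ s) :
    dist (c t) y + r t - ρ ≤ 0 ∧ closedBall (c t) (r t) ⊆ closedBall y ρ := by
  have hmargin : dist (c t) y + r t - ρ ≤ 0 :=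
    (le_add_mul_of_lipschitzOnWith_of_isCover (lipschitzOnWith_dist_add_sub hc hr y ρ)
      hFs hcover hsample ht).trans (by exact_mod_cast hη)
  exact ⟨hmargin, closedBall_subset_closedBall' (by linarith)⟩

end Sampling

/-- Claim (ii) in the proof of Theorem 3.4: a state-space containment constraint
verified at an ε-dense set of sample times extends to the whole horizon. -/
theorem state_space_containment_from_samples
    (n : ℕ) (hn : 1 ≤ n) (tc : ℝ) (htc : 0 < tc)
    (c : ℝ → EuclideanSpace ℝ (Fin n)) (r : ℝ → ℝ)
    (Lc Lr : ℝ) (hLc : 0 ≤ Lc) (hLr : 0 ≤ Lr)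
    (hLipc : ∀ s ∈ Icc (0:ℝ) tc, ∀ t ∈ Icc (0:ℝ) tc, ‖c s - c t‖ ≤ Lc * |s - t|)
    (hLipr : ∀ s ∈ Icc (0:ℝ) tc, ∀ t ∈ Icc (0:ℝ) tc, |r s - r t| ≤ Lr * |s - t|)
    (cY : EuclideanSpace ℝ (Fin n)) (rY : ℝ)
    (ε : ℝ) (hε : 0 ≤ ε) (ηh : ℝ) (hη : ηh + (Lc + Lr) * ε ≤ 0)
    (F : Set ℝ) (hF : F ⊆ Icc (0:ℝ) tc)
    (hdense : ∀ t ∈ Icc (0:ℝ) tc, ∃ s ∈ F, |t - s| ≤ ε)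
    (hsample : ∀ s ∈ F, ‖c s - cY‖ + r s - rY ≤ ηh) :
    ∀ t ∈ Icc (0:ℝ) tc,
      ‖c t - cY‖ + r t - rY ≤ 0 ∧ closedBall (c t) (r t) ⊆ closedBall cY rY := by
  lift Lc to ℝ≥0 using hLc
  lift Lr to ℝ≥0 using hLr
  lift ε to ℝ≥0 using hε
  have hc : LipschitzOnWith Lc c (Icc 0 tc) :=
    .of_dist_le_mul (by simpa only [dist_eq_norm, Real.norm_eq_abs] using hLipc)
  have hr : LipschitzOnWith Lr r (Icc 0 tc) := .of_dist_le_mul hLipr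
  have hcover : IsCover ε (Icc 0 tc) F := fun t ht ↦
    (hdense t ht).imp fun _ hs ↦ ⟨hs.1, edist_le_coe.mpr hs.2⟩
  simp only [← dist_eq_norm] at hsample ⊢
  exact fun t ht ↦ state_space_containment_from_samples_general hc hr hη hF hcover hsample ht
end

section
/- Let n ≥ 1 and t_c > 0. Let c : ℝ → ℝⁿ be Lipschitz on [0, t_c] with constant L_c ≥ 0 and r : ℝ → ℝ be Lipschitz on [0, t_c] with constant L_r ≥ 0. Let D ⊆ ℝⁿ be a fixed set, let ε ≥ 0, and let η̂ ∈ ℝ with η̂ + (L_c + L_r)·ε ≤ 0. Let F ⊆ [0, t_c] be a set of sample times such that (i) for every t ∈ [0, t_c] there exists s ∈ F with |t − s| ≤ ε, and (ii) −d(c(s), D) + r(s) ≤ η̂ for every s ∈ F. Then r(t) ≤ d(c(t), D) for all t ∈ [0, t_c]. -/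
open Metric Set

section Sampling

variable {T X : Type*} [PseudoMetricSpace T] [PseudoMetricSpace X] {S F : Set T} {ε η : ℝ}

theorem le_add_mul_of_lipschitzOnWith_of_forall_sample_le {f : T → ℝ} {K : NNReal}
    (hf : LipschitzOnWith K f S) (hFS : F ⊆ S) (hdense : ∀ t ∈ S, ∃ s ∈ F, dist t s ≤ ε)
    (hsample : ∀ s ∈ F, f s ≤ η) : ∀ t ∈ S, f t ≤ η + K * ε := by
  intro t ht
  obtain ⟨s, hs, hts⟩ := hdense t ht
  calc
    f t ≤ f s + K * dist t s := hf.le_add_mul ht (hFS hs)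
    _ ≤ η + K * ε := by gcongr; exact hsample s hs

theorem lipschitzOnWith_neg_infDist_add {c : T → X} {r : T → ℝ} {Kc Kr : NNReal}
    (hc : LipschitzOnWith Kc c S) (hr : LipschitzOnWith Kr r S) (D : Set X) :
    LipschitzOnWith (Kc + Kr) (fun t ↦ -infDist (c t) D + r t) S := by
  have hdist : LipschitzOnWith Kc (fun t ↦ infDist (c t) D) S := by
    simpa only [one_mul, Function.comp_def] using (lipschitz_infDist_pt D).comp_lipschitzOnWith hc
  exact hdist.neg.add hr

theorem obstacle_avoidance_from_samples_general {c : T → X} {r : T → ℝ} {Lc Lr : NNReal}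
    (hc : LipschitzOnWith Lc c S) (hr : LipschitzOnWith Lr r S) {D : Set X}
    (hη : η + (Lc + Lr) * ε ≤ 0) (hFS : F ⊆ S) (hdense : ∀ t ∈ S, ∃ s ∈ F, dist t s ≤ ε)
    (hsample : ∀ s ∈ F, -infDist (c s) D + r s ≤ η) :
    ∀ t ∈ S, r t ≤ infDist (c t) D := by
  intro t ht
  have hmargin : -infDist (c t) D + r t ≤ η + ↑(Lc + Lr) * ε :=
    le_add_mul_of_lipschitzOnWith_of_forall_sample_le (lipschitzOnWith_neg_infDist_add hc hr D)
      hFS hdense hsample t ht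
  push_cast at hmargin
  linarith

end Sampling

/-- Claim (iii) in the proof of Theorem 3.4 (static unsafe set): an obstacle
avoidance constraint verified at an ε-dense set of sample times extends to the
whole horizon. -/
theorem obstacle_avoidance_from_samples
    (n : ℕ) (hn : 1 ≤ n) (tc : ℝ) (htc : 0 < tc)
    (c : ℝ → EuclideanSpace ℝ (Fin n)) (r : ℝ → ℝ)
    (Lc Lr : ℝ) (hLc : 0 ≤ Lc) (hLr : 0 ≤ Lr)
    (hLipc : ∀ s ∈ Icc (0:ℝ) tc, ∀ t ∈ Icc (0:ℝ) tc, ‖c s - c t‖ ≤ Lc * |s - t|)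
    (hLipr : ∀ s ∈ Icc (0:ℝ) tc, ∀ t ∈ Icc (0:ℝ) tc, |r s - r t| ≤ Lr * |s - t|)
    (D : Set (EuclideanSpace ℝ (Fin n)))
    (ε : ℝ) (hε : 0 ≤ ε) (ηh : ℝ) (hη : ηh + (Lc + Lr) * ε ≤ 0)
    (F : Set ℝ) (hF : F ⊆ Icc (0:ℝ) tc)
    (hdense : ∀ t ∈ Icc (0:ℝ) tc, ∃ s ∈ F, |t - s| ≤ ε)
    (hsample : ∀ s ∈ F, -infDist (c s) D + r s ≤ ηh) :
    ∀ t ∈ Icc (0:ℝ) tc, r t ≤ infDist (c t) D := by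
  lift Lc to NNReal using hLc
  lift Lr to NNReal using hLr
  exact obstacle_avoidance_from_samples_general
    (.of_dist_le_mul (by simpa only [dist_eq_norm, Real.norm_eq_abs] using hLipc))
    (.of_dist_le_mul hLipr) hη hF hdense hsample
end

section
/- Let n ≥ 1 and t_c > 0. Let c : ℝ → ℝⁿ be Lipschitz on [0, t_c] with constant L_c ≥ 0 and r : ℝ → ℝ be Lipschitz on [0, t_c] with constant L_r ≥ 0. Let U : ℝ → Set(ℝⁿ) be a time-varying set such that for some L_U ≥ 0 and all x ∈ ℝⁿ and all s, t ∈ [0, t_c], d(x, U(t)) ≥ d(x, U(s)) − L_U·|t − s|. Let ε ≥ 0 and η̂ ∈ ℝ with η̂ + (L_c + L_r + L_U)·ε ≤ 0. Let F ⊆ [0, t_c] be a set of sample times such that (i) for every t ∈ [0, t_c] there exists s ∈ F with |t − s| ≤ ε, and (ii) −d(c(s), U(s)) + r(s) ≤ η̂ for every s ∈ F. Then r(t) ≤ d(c(t), U(t)) for all t ∈ [0, t_c]. -/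
open Metric Set

section

open scoped NNReal

variable {T X : Type*} [PseudoMetricSpace T] [PseudoMetricSpace X] {I F : Set T}

theorem lipschitzOnWith_infDist_moving {c : T → X} {U : T → Set X} {Kc KU : ℝ≥0}
    (hc : LipschitzOnWith Kc c I)
    (hU : ∀ x, LipschitzOnWith KU (fun t ↦ infDist x (U t)) I) :
    LipschitzOnWith (Kc + KU) (fun t ↦ infDist (c t) (U t)) I := by
  refine .of_le_add_mul _ fun s hs t ht ↦ ?_
  calc infDist (c s) (U s)
      ≤ infDist (c t) (U s) + dist (c s) (c t) := infDist_le_infDist_add_dist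
    _ ≤ (infDist (c t) (U t) + KU * dist s t) + Kc * dist s t :=
        add_le_add ((hU (c t)).le_add_mul hs ht) (hc.dist_le_mul s hs t ht)
    _ = infDist (c t) (U t) + ↑(Kc + KU) * dist s t := by push_cast; ring

theorem le_add_mul_of_lipschitzOnWith_of_cover {f : T → ℝ} {K : ℝ≥0} {ε η : ℝ}
    (hf : LipschitzOnWith K f I) (hFI : F ⊆ I)
    (hcover : ∀ t ∈ I, ∃ s ∈ F, dist t s ≤ ε) (hsample : ∀ s ∈ F, f s ≤ η) :
    ∀ t ∈ I, f t ≤ η + K * ε := by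
  intro t ht
  obtain ⟨s, hsF, hts⟩ := hcover t ht
  calc f t ≤ f s + K * dist t s := hf.le_add_mul ht (hFI hsF)
    _ ≤ η + K * ε := by gcongr; exact hsample s hsF

theorem obstacle_avoidance_from_samples_time_varying_general
    {c : T → X} {r : T → ℝ} {U : T → Set X} {Kc Kr KU : ℝ≥0} {ε η : ℝ}
    (hc : LipschitzOnWith Kc c I) (hr : LipschitzOnWith Kr r I)
    (hU : ∀ x, LipschitzOnWith KU (fun t ↦ infDist x (U t)) I)
    (hη : η + (Kc + Kr + KU) * ε ≤ 0) (hFI : F ⊆ I)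
    (hcover : ∀ t ∈ I, ∃ s ∈ F, dist t s ≤ ε)
    (hsample : ∀ s ∈ F, -infDist (c s) (U s) + r s ≤ η) :
    ∀ t ∈ I, r t ≤ infDist (c t) (U t) := by
  intro t ht
  have hviolation :
      LipschitzOnWith ((Kc + KU) + Kr) (fun t ↦ -infDist (c t) (U t) + r t) I :=
    (lipschitzOnWith_infDist_moving hc hU).neg.add hr
  have hbound := le_add_mul_of_lipschitzOnWith_of_cover hviolation hFI hcover hsample t ht
  push_cast at hbound
  linarith

end

/-- Time-varying-obstacle version of claim (iii) in the proof of Theorem 3.4: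
the unsafe set varies L_U-Lipschitz-continuously in time in the sense of
point-to-set distances. -/
theorem obstacle_avoidance_from_samples_time_varying
    (n : ℕ) (hn : 1 ≤ n) (tc : ℝ) (htc : 0 < tc)
    (c : ℝ → EuclideanSpace ℝ (Fin n)) (r : ℝ → ℝ)
    (Lc Lr : ℝ) (hLc : 0 ≤ Lc) (hLr : 0 ≤ Lr)
    (hLipc : ∀ s ∈ Icc (0:ℝ) tc, ∀ t ∈ Icc (0:ℝ) tc, ‖c s - c t‖ ≤ Lc * |s - t|)
    (hLipr : ∀ s ∈ Icc (0:ℝ) tc, ∀ t ∈ Icc (0:ℝ) tc, |r s - r t| ≤ Lr * |s - t|)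
    (U : ℝ → Set (EuclideanSpace ℝ (Fin n))) (LU : ℝ) (hLU : 0 ≤ LU)
    (hLipU : ∀ x : EuclideanSpace ℝ (Fin n), ∀ s ∈ Icc (0:ℝ) tc, ∀ t ∈ Icc (0:ℝ) tc,
      infDist x (U s) - LU * |t - s| ≤ infDist x (U t))
    (ε : ℝ) (hε : 0 ≤ ε) (ηh : ℝ) (hη : ηh + (Lc + Lr + LU) * ε ≤ 0)
    (F : Set ℝ) (hF : F ⊆ Icc (0:ℝ) tc)
    (hdense : ∀ t ∈ Icc (0:ℝ) tc, ∃ s ∈ F, |t - s| ≤ ε)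
    (hsample : ∀ s ∈ F, -infDist (c s) (U s) + r s ≤ ηh) :
    ∀ t ∈ Icc (0:ℝ) tc, r t ≤ infDist (c t) (U t) := by
  lift Lc to NNReal using hLc
  lift Lr to NNReal using hLr
  lift LU to NNReal using hLU
  have hc : LipschitzOnWith Lc c (Icc 0 tc) :=
    .of_dist_le_mul <| by simpa only [dist_eq_norm, Real.norm_eq_abs] using hLipc
  have hU : ∀ x, LipschitzOnWith LU (fun t ↦ infDist x (U t)) (Icc 0 tc) := fun x ↦
    .of_le_add_mul _ fun s hs t ht ↦ sub_le_iff_le_add.mp <| by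
      simpa only [Real.dist_eq, abs_sub_comm s t] using hLipU x s hs t ht
  exact obstacle_avoidance_from_samples_time_varying_general hc (.of_dist_le_mul hLipr) hU
    hη hF hdense hsample
end
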